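/- For every natural number k, lim_{ε→0⁺} (1/(2π)) ∫_ℝ e^{it}·(ε + it)^{−(k + 3/2)} dt = 2^{k+1} / (√π · (2k+1)‼). -/

import Mathlib

open MeasureTheory Filter Topology

open Complex Set in
theorem integrableOn_cpow_mul_exp_neg_mul_Ioi {a z : ℂ} (ha : 0 < a.re) (hz : 0 < z.re) :
    IntegrableOn (fun t : ℝ => (t : ℂ) ^ (a - 1) * exp (-(z * t))) (Ioi 0) := by
  have hreal := integrableOn_rpow_mul_exp_neg_mul_rpow (p := 1) (s := a.re - 1) (b := z.re)
    (by linarith) one_pos hz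
  refine Integrable.mono' hreal ?_ ?_
  · refine ContinuousOn.aestronglyMeasurable (fun t ht => ?_) measurableSet_Ioi
    have : ((t : ℝ) : ℂ) ∈ slitPlane := by simpa using ht
    exact ((continuous_ofReal.continuousAt.cpow continuousAt_const this).mul
      (by fun_prop)).continuousWithinAt
  · refine (ae_restrict_iff' measurableSet_Ioi).2 (.of_forall fun t ht => ?_)
    rw [norm_mul, norm_cpow_eq_rpow_re_of_pos ht, norm_exp]
    simp

open Complex Set in
theorem differentiableAt_integral_cpow_mul_exp_neg_mul_Ioi {a z : ℂ} (ha : 0 < a.re)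
    (hz : 0 < z.re) :
    DifferentiableAt ℂ
      (fun z : ℂ => ∫ t : ℝ in Ioi 0, (t : ℂ) ^ (a - 1) * exp (-(z * t))) z := by
  have hb : 0 < ((z.re / 2 : ℝ) : ℂ).re := by simpa using hz
  have ha' : 0 < (a + 1).re := by simp; linarith
  have hs : {w : ℂ | z.re / 2 < w.re} ∈ 𝓝 z :=
    (isOpen_lt continuous_const continuous_re).mem_nhds (by simpa using hz)
  have hcongr : ∀ w : ℂ, ∀ t ∈ Ioi (0 : ℝ), (t : ℂ) ^ (a + 1 - 1) * exp (-(w * t)) * (-1)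
      = (t : ℂ) ^ (a - 1) * (exp (-(w * t)) * (-t)) := by
    intro w t ht
    have ht0 : (t : ℂ) ≠ 0 := ofReal_ne_zero.2 (ne_of_gt ht)
    rw [show a + 1 - 1 = (a - 1) + 1 by ring, cpow_add _ _ ht0, cpow_one]
    ring
  refine (hasDerivAt_integral_of_dominated_loc_of_deriv_le
    (μ := volume.restrict (Ioi (0 : ℝ)))
    (F := fun w (t : ℝ) => (t : ℂ) ^ (a - 1) * exp (-(w * t)))
    (F' := fun w (t : ℝ) => (t : ℂ) ^ (a - 1) * (exp (-(w * t)) * (-t)))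
    (bound := fun t : ℝ => ‖(t : ℂ) ^ (a + 1 - 1) * exp (-(((z.re / 2 : ℝ) : ℂ) * t))‖)
    hs ?_ (integrableOn_cpow_mul_exp_neg_mul_Ioi ha hz) ?_ ?_
    (integrableOn_cpow_mul_exp_neg_mul_Ioi ha' hb).norm ?_).2.differentiableAt
  · filter_upwards [hs] with w hw
    exact (integrableOn_cpow_mul_exp_neg_mul_Ioi ha
      (lt_trans (half_pos hz) hw)).aestronglyMeasurable
  · exact (IntegrableOn.congr_fun
      (Integrable.mul_const (integrableOn_cpow_mul_exp_neg_mul_Ioi ha' hz) (-1))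
      (hcongr z) measurableSet_Ioi).aestronglyMeasurable
  · refine (ae_restrict_iff' measurableSet_Ioi).2 (.of_forall fun t ht w hw => ?_)
    rw [← hcongr w t ht, norm_mul, norm_mul, norm_mul, norm_exp, norm_exp]
    simp only [norm_neg, norm_one, mul_one]
    refine mul_le_mul_of_nonneg_left (Real.exp_le_exp.2 ?_) (norm_nonneg _)
    have : z.re / 2 * t ≤ w.re * t := mul_le_mul_of_nonneg_right (le_of_lt hw) (le_of_lt ht)
    simpa using this
  · refine .of_forall fun t w _ => ?_
    have h : HasDerivAt (fun w : ℂ => -(w * t)) (-(t : ℂ)) w := by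
      simpa using ((hasDerivAt_id w).mul_const (t : ℂ)).fun_neg
    exact h.cexp.const_mul _

open Complex Set in
/-- The Laplace transform of `t ^ (a - 1)` on the open right half plane. -/
theorem integral_cpow_mul_exp_neg_complex_mul_Ioi {a z : ℂ} (ha : 0 < a.re) (hz : 0 < z.re) :
    ∫ t : ℝ in Ioi 0, (t : ℂ) ^ (a - 1) * exp (-(z * t)) = z ^ (-a) * Gamma a := by
  have hU : IsOpen {w : ℂ | 0 < w.re} := isOpen_lt continuous_const continuous_re
  have hf : DifferentiableOn ℂ
      (fun z : ℂ => ∫ t : ℝ in Ioi 0, (t : ℂ) ^ (a - 1) * exp (-(z * t))) {w | 0 < w.re} :=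
    fun w hw => (differentiableAt_integral_cpow_mul_exp_neg_mul_Ioi ha hw).differentiableWithinAt
  have hg : DifferentiableOn ℂ (fun z : ℂ => z ^ (-a) * Gamma a) {w | 0 < w.re} :=
    fun w hw => ((differentiableAt_id.cpow_const (Or.inl hw)).mul_const _).differentiableWithinAt
  refine (hf.analyticOnNhd hU).eqOn_of_preconnected_of_frequently_eq (hg.analyticOnNhd hU)
    (convex_halfSpace_re_gt 0).isPreconnected (z₀ := 1) (by simp) ?_ hz
  have hlim : Tendsto (fun r : ℝ => (r : ℂ)) (𝓝[≠] 1) (𝓝[≠] 1) :=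
    continuous_ofReal.continuousWithinAt.tendsto_nhdsWithin fun r hr => by simpa using hr
  refine hlim.frequently (Eventually.frequently ?_)
  filter_upwards [nhdsWithin_le_nhds (lt_mem_nhds (zero_lt_one' ℝ))] with r hr
  rw [Complex.integral_cpow_mul_exp_neg_mul_Ioi ha hr, one_div, inv_cpow, cpow_neg]
  rw [arg_ofReal_of_nonneg hr.le]
  exact Real.pi_pos.ne

open Complex in
theorem integrable_add_I_mul_cpow_neg {a ε : ℝ} (ha : 1 < a) (hε : 0 < ε) :
    Integrable fun t : ℝ => ((ε : ℂ) + I * t) ^ (-(a : ℂ)) := by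
  have hJ : Integrable fun t : ℝ => (1 + ‖t‖) ^ (-a) :=
    integrable_one_add_norm (by simpa using ha)
  refine (hJ.const_mul ((ε / (1 + ε)) ^ (-a))).mono' ?_ (.of_forall fun t => ?_)
  · refine Continuous.aestronglyMeasurable (continuous_iff_continuousAt.2 fun t => ?_)
    exact ContinuousAt.cpow (by fun_prop) continuousAt_const (Or.inl (by simpa using hε))
  · rw [← ofReal_neg, norm_cpow_real, ← Real.mul_rpow (by positivity) (by positivity)]
    refine Real.rpow_le_rpow_of_nonpos (by positivity) ?_ (by linarith)
    have h₁ : ε ≤ ‖(ε : ℂ) + I * t‖ := by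
      simpa [abs_of_pos hε] using abs_re_le_norm ((ε : ℂ) + I * t)
    have h₂ : ‖t‖ ≤ ‖(ε : ℂ) + I * t‖ := by
      simpa using abs_im_le_norm ((ε : ℂ) + I * t)
    rw [div_mul_eq_mul_div, div_le_iff₀ (by positivity)]
    nlinarith

open Complex Set FourierTransform in
/-- The Bromwich integral of `z ^ (-a)` along the line `Re z = ε`. -/
theorem integral_exp_I_mul_mul_add_I_mul_cpow_neg {a ε : ℝ} (ha : 1 < a) (hε : 0 < ε) :
    1 / (2 * (Real.pi : ℂ)) * ∫ t : ℝ, exp (I * t) * ((ε : ℂ) + I * t) ^ (-(a : ℂ)) =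
      exp (-ε) / Gamma a := by
  have ha' : 0 < (a : ℂ).re := by simp; linarith
  have hε' : 0 < (ε : ℂ).re := by simpa using hε
  have hΓ : Gamma a ≠ 0 := Gamma_ne_zero_of_re_pos ha'
  set f : ℝ → ℂ := (Ioi 0).indicator fun t => (t : ℂ) ^ ((a : ℂ) - 1) * exp (-(ε * t)) with hf
  have hfint : Integrable f :=
    (integrable_indicator_iff measurableSet_Ioi).2 (integrableOn_cpow_mul_exp_neg_mul_Ioi ha' hε')
  have hF : 𝓕 f = fun w : ℝ =>
      ((ε : ℂ) + I * ((2 * Real.pi * w : ℝ) : ℂ)) ^ (-(a : ℂ)) * Gamma a := by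
    ext w
    rw [Real.fourier_real_eq_integral_exp_smul, ← integral_cpow_mul_exp_neg_complex_mul_Ioi ha'
      (by simpa using hε), ← integral_indicator measurableSet_Ioi]
    congr 1 with t
    by_cases ht : t ∈ Ioi (0 : ℝ)
    · simp only [hf, indicator_of_mem ht, smul_eq_mul]
      rw [mul_left_comm, ← exp_add]
      congr 2
      push_cast
      ring
    · simp [hf, indicator_of_notMem ht]
  have hFint : Integrable (𝓕 f) := by
    rw [hF]
    exact ((integrable_add_I_mul_cpow_neg ha hε).comp_mul_left'
      (by positivity : 2 * Real.pi ≠ 0)).mul_const _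
  have hcont : ContinuousAt f 1 := by
    have hev : f =ᶠ[𝓝 1] fun t : ℝ => (t : ℂ) ^ ((a : ℂ) - 1) * exp (-(ε * t)) := by
      filter_upwards [lt_mem_nhds (zero_lt_one' ℝ)] with t ht
      exact indicator_of_mem ht _
    refine ContinuousAt.congr ?_ hev.symm
    exact (continuous_ofReal.continuousAt.cpow continuousAt_const (by simp)).mul (by fun_prop)
  have hinv := hfint.fourierInv_fourier_eq hFint hcont
  have hsub := Measure.integral_comp_mul_left
    (fun t : ℝ => exp (I * t) * ((ε : ℂ) + I * t) ^ (-(a : ℂ))) (2 * Real.pi)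
  rw [Real.fourierInv_eq', hF] at hinv
  have hf1 : f 1 = exp (-ε) := by simp [hf]
  rw [hf1] at hinv
  rw [eq_div_iff hΓ, ← hinv]
  rw [abs_of_pos (by positivity), real_smul] at hsub
  have hconst : 1 / (2 * (Real.pi : ℂ)) = (((2 * Real.pi)⁻¹ : ℝ) : ℂ) := by
    push_cast
    rw [one_div]
  rw [hconst, ← hsub, ← integral_mul_const]
  congr 1 with w
  simp only [smul_eq_mul, mul_assoc]
  congr 2
  simp
  ring

theorem Complex.Gamma_nat_add_three_halves (k : ℕ) :
    Complex.Gamma ((k + 3 / 2 : ℝ) : ℂ) =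
      (Nat.doubleFactorial (2 * k + 1) : ℂ) * (Real.sqrt Real.pi : ℂ) / 2 ^ (k + 1) := by
  rw [Complex.Gamma_ofReal, show (k + 3 / 2 : ℝ) = k + 1 + 1 / 2 by ring,
    Real.Gamma_nat_add_one_add_half]
  push_cast
  rfl

/-- For every natural number `k`,
`lim_{ε→0⁺} (1/(2π)) ∫_ℝ e^{it} (ε + it)^{−(k+3/2)} dt = 2^{k+1}/(√π (2k+1)‼)`. -/
theorem limit_integral_half_integer (k : ℕ) :
    Tendsto (fun ε : ℝ => (1 / (2 * (Real.pi : ℂ))) *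
        ∫ t : ℝ, Complex.exp (Complex.I * t) *
          ((ε : ℂ) + Complex.I * t) ^ (-((k : ℂ) + 3 / 2)))
      (𝓝[>] 0)
      (𝓝 ((2 : ℂ) ^ (k + 1) /
        ((Real.sqrt Real.pi : ℂ) * (Nat.doubleFactorial (2 * k + 1) : ℂ)))) := by
  have hk : (1 : ℝ) < k + 3 / 2 := by
    have : (0 : ℝ) ≤ k := k.cast_nonneg
    linarith
  have hlim : Tendsto (fun ε : ℝ => Complex.exp (-ε) / Complex.Gamma ((k + 3 / 2 : ℝ) : ℂ))
      (𝓝[>] 0) (𝓝 (Complex.exp (-(0 : ℝ)) / Complex.Gamma ((k + 3 / 2 : ℝ) : ℂ))) :=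
    (Continuous.tendsto (by fun_prop) 0).mono_left nhdsWithin_le_nhds
  rw [Complex.Gamma_nat_add_three_halves, Complex.ofReal_zero, neg_zero, Complex.exp_zero,
    one_div_div, mul_comm (Nat.doubleFactorial _ : ℂ)] at hlim
  refine hlim.congr' ?_
  filter_upwards [self_mem_nhdsWithin] with ε hε
  rw [mul_comm (Real.sqrt _ : ℂ), ← Complex.Gamma_nat_add_three_halves,
    ← integral_exp_I_mul_mul_add_I_mul_cpow_neg hk hε]
  push_cast
  rfl
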